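/- Let O be the ring of integers of a number field F and let K be an infinite algebraic extension of F which is totally ramified at a prime 𝔭 of F dividing the rational prime p (i.e., every finite subextension K'/F inside K is totally ramified at 𝔭). For every proper variety X over Spec(O), there exists a constant m > 0 such that for every O-morphism f : X → X, every element of Per_(p)(X(K), f) is at most m. -/

import Mathlib

open AlgebraicGeometry CategoryTheory Limits Function NumberField

noncomputable section

set_option synthInstance.maxHeartbeats 1000000
set_option maxHeartbeats 1000000

/-- The set of `A`-valued points of `X` lying over `Spec.map φ`. -/
def Scheme.PointsOver {X : Scheme} {R : CommRingCat} (π : X ⟶ Spec R) {A : CommRingCat}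
    (φ : R ⟶ A) : Type _ :=
  { s : Spec A ⟶ X // s ≫ π = Spec.map φ }

/-- The action of an endomorphism `f : X ⟶ X` over `Spec R` on points. -/
def actPt {X : Scheme} {R A : CommRingCat} {π : X ⟶ Spec R} {φ : R ⟶ A}
    (f : X ⟶ X) (hf : f ≫ π = π) :
    Scheme.PointsOver π φ → Scheme.PointsOver π φ :=
  fun s => ⟨s.1 ≫ f, by rw [Category.assoc, hf, s.2]⟩

/-- The set of `f`-periods of points of `S`. -/
def PerSet {S : Type*} (f : S → S) : Set ℕ :=
  {n | 0 < n ∧ ∃ P : S, Function.minimalPeriod f P = n}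

/-- The prime-to-`p` part of the set of `f`-periods. -/
def PerSetP (p : ℕ) {S : Type*} (f : S → S) : Set ℕ :=
  {n | n ∈ PerSet f ∧ n.Coprime p}

/-- An algebraic extension `K/F` is totally ramified at a prime `𝔭` of the subring `R` of `F`
if for every finite subextension `L` the ideal `𝔭` generates the `[L:F]`-th power of a single
maximal ideal of the integral closure of `R` in `L`. -/
def IsTotallyRamifiedAtAlgExt (R F K : Type*) [CommRing R] [Field F] [Field K]
    [Algebra R F] [Algebra F K] (𝔭 : Ideal R) : Prop :=
  ∀ (L : IntermediateField F K), FiniteDimensional F L →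
    ∀ [Algebra R L] [IsScalarTower R F L],
    ∃ P : Ideal (integralClosure R L), P.IsMaximal ∧
      𝔭.map (algebraMap R (integralClosure R L)) = P ^ Module.finrank F L

/-!
By the valuative criterion `X(K) = X(A)` for a valuation ring `A` of `K` dominating the
localization at `𝔭`, and total ramification forces the residue field of `A` to be `O ⧸ 𝔭 = k`.
Since `X(k)` is finite, some iterate of `f`, bounded independently of `f`, fixes the closed point
`x` of a given periodic `A`-point. That iterate acts on the Noetherian local ring `𝒪_{X,x}`, and on
its quotient `S` by the functions vanishing along the orbit it has finite order, prime to `p`. A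
bounded power of it is the identity on the finite ring `S ⧸ 𝔪 ^ 2`; such a unipotent endomorphism
of order prime to `p` is congruent to the identity modulo every `𝔪 ^ j`, so it is the identity by
Krull's intersection theorem.
-/

open IsLocalRing
open scoped IntermediateField

universe u

theorem isPeriodicPt_factorial_of_card_le {α : Type*} [Finite α] {f : α → α} {x : α} {k : ℕ}
    (hx : x ∈ periodicPts f) (hk : Nat.card α ≤ k) : IsPeriodicPt f k.factorial x := by
  have := Fintype.ofFinite α
  rw [Nat.card_eq_fintype_card] at hk
  exact (isPeriodicPt_factorial_card_of_mem_periodicPts hx).trans_dvd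
    (Nat.factorial_dvd_factorial hk)

section Semiconj

variable {α β : Type*} {f : α → α} {g : β → β} {e : α → β}

theorem isPeriodicPt_iff_of_semiconj (h : Semiconj e f g) (he : Injective e) {n : ℕ} {x : α} :
    IsPeriodicPt g n (e x) ↔ IsPeriodicPt f n x :=
  ⟨fun hx ↦ he (((h.iterate_right n) x).trans hx), fun hx ↦ hx.map h⟩

theorem perSet_eq_of_semiconj (h : Semiconj e f g) (he : Bijective e) : PerSet g = PerSet f := by
  have hmin (x : α) : minimalPeriod g (e x) = minimalPeriod f x :=
    minimalPeriod_eq_minimalPeriod_iff.2 fun _ ↦ isPeriodicPt_iff_of_semiconj h he.1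
  simp only [PerSet, he.2.exists, hmin]

end Semiconj

section UnipotentEndomorphism

variable {S : Type*} [CommRing S] {I : Ideal S} {h : S →+* S}

theorem pow_apply_sub_mem (hI : ∀ s, h s - s ∈ I) (i : ℕ) (s : S) : (h ^ i) s - s ∈ I := by
  induction i with
  | zero => simp
  | succ i ih =>
    rw [pow_succ', RingHom.mul_def, RingHom.comp_apply]
    simpa using I.add_mem (hI ((h ^ i) s)) ih

theorem apply_sub_mem_pow_succ (hI : ∀ s, h s - s ∈ I ^ 2) (j : ℕ) {s : S} (hs : s ∈ I ^ j) :
    h s - s ∈ I ^ (j + 1) := by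
  have hI1 (s : S) : h s - s ∈ I := Ideal.pow_le_self two_ne_zero (hI s)
  induction j generalizing s with
  | zero => simpa using hI1 s
  | succ j ih =>
    rw [pow_succ] at hs
    induction hs using Submodule.mul_induction_on' with
    | mem_mul_mem a ha b hb =>
      have hhb : h b ∈ I := (Submodule.sub_mem_iff_left I hb).1 (hI1 b)
      have leibniz : h (a * b) - a * b = (h a - a) * h b + a * (h b - b) := by
        rw [map_mul]; ring
      rw [leibniz]
      refine add_mem (pow_succ I (j + 1) ▸ Ideal.mul_mem_mul (ih ha) hhb) ?_
      rw [add_assoc, pow_add]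
      exact Ideal.mul_mem_mul ha (hI b)
    | add x _ y _ hx hy =>
      rw [map_add, add_sub_add_comm]
      exact add_mem hx hy

theorem apply_sub_mem_pow_of_pow_eq_one {n : ℕ} (hn : IsUnit (n : S)) (hpow : h ^ n = 1)
    (hI : ∀ s, h s - s ∈ I ^ 2) (j : ℕ) (s : S) : h s - s ∈ I ^ j := by
  induction j generalizing s with
  | zero => simp
  | succ j ih =>
    -- `∑ i < n, h ^ i (h s - s)` vanishes and is congruent to `n * (h s - s)` mod `I ^ (j + 1)`.
    have telescope : ∑ i ∈ Finset.range n, (h ^ i) (h s - s) = 0 := by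
      have := Finset.sum_range_sub (fun i ↦ (h ^ i) s) n
      simpa [pow_succ, hpow] using this
    have hsum : ∑ i ∈ Finset.range n, ((h ^ i) (h s - s) - (h s - s)) ∈ I ^ (j + 1) :=
      sum_mem fun i _ ↦ apply_sub_mem_pow_succ (pow_apply_sub_mem hI i) j (ih s)
    rw [Finset.sum_sub_distrib, telescope, Finset.sum_const, Finset.card_range, zero_sub,
      neg_mem_iff, nsmul_eq_mul] at hsum
    exact (Ideal.unit_mul_mem_iff_mem _ hn).1 hsum

end UnipotentEndomorphism

section FiniteOrderEndomorphism

theorem quotientMap_pow_mk {R : Type*} [CommRing R] {I : Ideal R} {f : R →+* R}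
    (hf : I ≤ I.comap f) (i : ℕ) (a : R) :
    (Ideal.quotientMap I f hf ^ i) (Ideal.Quotient.mk I a) = Ideal.Quotient.mk I ((f ^ i) a) := by
  have hsemi : Semiconj (Ideal.Quotient.mk I) f (Ideal.quotientMap I f hf) := fun _ ↦ rfl
  rw [RingHom.coe_pow, RingHom.coe_pow]
  exact ((hsemi.iterate_right i) a).symm

variable {S : Type*} [CommRing S] [IsLocalRing S] [IsNoetherianRing S]

theorem eq_one_of_pow_eq_one_of_apply_sub_mem {h : S →+* S} {n : ℕ} (hn : IsUnit (n : S))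
    (hpow : h ^ n = 1) (hsq : ∀ s, h s - s ∈ maximalIdeal S ^ 2) : h = 1 := by
  ext s
  have hmem : h s - s ∈ ⨅ j : ℕ, maximalIdeal S ^ j :=
    (Ideal.mem_iInf).2 fun j ↦ apply_sub_mem_pow_of_pow_eq_one hn hpow hsq j s
  rw [Ideal.iInf_pow_eq_bot_of_isLocalRing _ (Ideal.IsPrime.ne_top inferInstance)] at hmem
  simpa [sub_eq_zero] using hmem

theorem pow_factorial_eq_one_of_card_le [Finite (S ⧸ maximalIdeal S ^ 2)] {h : S →+* S} {n k : ℕ}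
    (hn : IsUnit (n : S)) (hpow : h ^ n = 1) (hk : Nat.card (S ⧸ maximalIdeal S ^ 2) ≤ k) :
    h ^ k.factorial = 1 := by
  have hn0 : n ≠ 0 := by rintro rfl; simp at hn
  have hlocal : IsLocalHom h := ⟨fun s hs ↦ by
    obtain ⟨m, rfl⟩ := Nat.exists_eq_succ_of_ne_zero hn0
    simpa [← RingHom.comp_apply, ← RingHom.mul_def, ← pow_succ, hpow] using hs.map (h ^ m)⟩
  have hstable : maximalIdeal S ^ 2 ≤ (maximalIdeal S ^ 2).comap h := by
    rw [← Ideal.map_le_iff_le_comap, Ideal.map_pow]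
    exact Ideal.pow_right_mono (((local_hom_TFAE h).out 0 2).1 hlocal) 2
  refine eq_one_of_pow_eq_one_of_apply_sub_mem hn (by rw [pow_right_comm, hpow, one_pow]) fun s ↦ ?_
  have hperiodic : Ideal.Quotient.mk (maximalIdeal S ^ 2) s ∈
      periodicPts (Ideal.quotientMap (maximalIdeal S ^ 2) h hstable) :=
    mk_mem_periodicPts (Nat.pos_of_ne_zero hn0) <| by
      rw [IsPeriodicPt, IsFixedPt, ← RingHom.coe_pow, quotientMap_pow_mk, hpow]; rfl
  rw [← Ideal.Quotient.eq, ← quotientMap_pow_mk hstable, RingHom.coe_pow]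
  exact isPeriodicPt_factorial_of_card_le hperiodic hk

end FiniteOrderEndomorphism

theorem finite_and_card_quotient_maximalIdeal_sq_le_of_surjective {R S : Type*}
    [CommRing R] [CommRing S] [IsLocalRing R] [IsLocalRing S]
    [Finite (R ⧸ maximalIdeal R ^ 2)] {f : R →+* S} (hf : Surjective f) :
    Finite (S ⧸ maximalIdeal S ^ 2) ∧
      Nat.card (S ⧸ maximalIdeal S ^ 2) ≤ Nat.card (R ⧸ maximalIdeal R ^ 2) := by
  have hlocal : IsLocalHom f := .of_surjective f hf
  have hle : maximalIdeal R ^ 2 ≤ (maximalIdeal S ^ 2).comap f := by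
    rw [← Ideal.map_le_iff_le_comap, Ideal.map_pow]
    exact Ideal.pow_right_mono (((local_hom_TFAE f).out 0 2).1 hlocal) 2
  have hsurj : Surjective (Ideal.quotientMap (maximalIdeal S ^ 2) f hle) :=
    Ideal.quotientMap_surjective hf
  exact ⟨.of_surjective _ hsurj, Nat.card_le_card_of_surjective _ hsurj⟩

section OrbitKer

variable {R A : Type*} [CommRing R] [CommRing A] {φ : R →+* R} {ψ : R →+* A}

/-- The ideal of the closed subscheme of `Spec R` through which all the `A`-points
`ψ ∘ φ ^ i` of the orbit of `ψ` factor; it is the largest `φ`-stable ideal contained in `ker ψ`. -/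
def orbitKer (φ : R →+* R) (ψ : R →+* A) : Ideal R :=
  ⨅ i : ℕ, RingHom.ker (ψ.comp (φ ^ i))

theorem mem_orbitKer {a : R} : a ∈ orbitKer φ ψ ↔ ∀ i, ψ ((φ ^ i) a) = 0 := by
  simp [orbitKer, RingHom.mem_ker]

theorem orbitKer_le_comap : orbitKer φ ψ ≤ (orbitKer φ ψ).comap φ := fun a ha ↦
  mem_orbitKer.2 fun i ↦ by simpa [pow_succ] using mem_orbitKer.1 ha (i + 1)

theorem orbitKer_ne_top [Nontrivial A] : orbitKer φ ψ ≠ ⊤ := fun h ↦ by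
  simpa using mem_orbitKer.1 ((Ideal.eq_top_iff_one _).1 h) 0

/-- The endomorphism of `R ⧸ orbitKer φ ψ` induced by `φ`. -/
def orbitMap (φ : R →+* R) (ψ : R →+* A) : R ⧸ orbitKer φ ψ →+* R ⧸ orbitKer φ ψ :=
  Ideal.quotientMap _ φ orbitKer_le_comap

theorem orbitMap_pow_eq_one_iff {n : ℕ} : orbitMap φ ψ ^ n = 1 ↔ ψ.comp (φ ^ n) = ψ := by
  have hmk (a : R) : (orbitMap φ ψ ^ n) (Ideal.Quotient.mk _ a) = Ideal.Quotient.mk _ a ↔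
      ∀ i, ψ ((φ ^ n) ((φ ^ i) a)) = ψ ((φ ^ i) a) := by
    rw [orbitMap, quotientMap_pow_mk, Ideal.Quotient.eq, mem_orbitKer]
    refine forall_congr' fun i ↦ ?_
    rw [map_sub, map_sub, sub_eq_zero, ← RingHom.comp_apply (φ ^ i), ← RingHom.mul_def,
      (Commute.pow_pow_self φ i n).eq]
    rfl
  constructor
  · intro h
    ext a
    simpa using (hmk a).1 (by rw [h]; rfl) 0
  · intro h
    ext a
    exact (hmk a).2 fun i ↦ congr($h ((φ ^ i) a))

theorem comp_pow_factorial_eq_of_comp_pow_eq [IsLocalRing R] [IsNoetherianRing R]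
    [Finite (R ⧸ maximalIdeal R ^ 2)] [Nontrivial A] {n : ℕ} (hn : IsUnit (n : R))
    (h : ψ.comp (φ ^ n) = ψ) : ψ.comp (φ ^ (Nat.card (R ⧸ maximalIdeal R ^ 2)).factorial) = ψ := by
  have : Nontrivial (R ⧸ orbitKer φ ψ) := Ideal.Quotient.nontrivial_iff.2 orbitKer_ne_top
  have hmk : Surjective (Ideal.Quotient.mk (orbitKer φ ψ)) := Ideal.Quotient.mk_surjective
  have : IsLocalRing (R ⧸ orbitKer φ ψ) := .of_surjective' _ hmk
  obtain ⟨_, hcard⟩ := finite_and_card_quotient_maximalIdeal_sq_le_of_surjective hmk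
  have hn' : IsUnit (n : R ⧸ orbitKer φ ψ) := by simpa using hn.map (Ideal.Quotient.mk _)
  exact orbitMap_pow_eq_one_iff.1
    (pow_factorial_eq_one_of_card_le hn' (orbitMap_pow_eq_one_iff.2 h) hcard)

end OrbitKer

section FiniteTypePoints

theorem finite_comp_eq_of_finiteType {R B k : CommRingCat} [Finite k] {j : R ⟶ B}
    (hj : j.hom.FiniteType) (c : R ⟶ k) : Finite {ψ : B ⟶ k // j ≫ ψ = c} := by
  algebraize [j.hom, c.hom]
  obtain ⟨s, hs⟩ := (inferInstance : Algebra.FiniteType R B).out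
  let toAlgHom (ψ : {ψ : B ⟶ k // j ≫ ψ = c}) : B →ₐ[R] k :=
    { ψ.1.hom with commutes' := fun r ↦ congr($(ψ.2).hom r) }
  refine .of_injective (fun ψ (x : s) ↦ toAlgHom ψ x) fun ψ ψ' h ↦ ?_
  have heq : toAlgHom ψ = toAlgHom ψ' :=
    AlgHom.ext_of_adjoin_eq_top hs fun x hx ↦ congrFun h ⟨x, hx⟩
  ext x
  exact congr($heq x)

theorem finite_pointsOver_of_affine {R B k : CommRingCat.{u}} [Finite k] (q : Spec B ⟶ Spec R)
    [hq : LocallyOfFiniteType q] (c : R ⟶ k) : Finite (Scheme.PointsOver q c) := by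
  obtain ⟨j, rfl⟩ := Spec.map_surjective q
  have := finite_comp_eq_of_finiteType
    ((HasRingHomProperty.Spec_iff (P := @LocallyOfFiniteType)).1 hq) c
  let toHom (s : Scheme.PointsOver (Spec.map j) c) : {ψ : B ⟶ k // j ≫ ψ = c} :=
    ⟨Spec.preimage s.1, Spec.map_injective (by simpa using s.2)⟩
  refine .of_injective toHom fun s t h ↦ Subtype.ext ?_
  rw [← Spec.map_preimage s.1, ← Spec.map_preimage t.1]
  exact congr(Spec.map ($h).1)

theorem range_subset_opensRange_of_closedPoint_mem {A : CommRingCat.{u}} [IsLocalRing A]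
    {X : Scheme.{u}} (t : Spec A ⟶ X) {U : X.Opens} (h : t (closedPoint A) ∈ U) :
    Set.range t ⊆ U := by
  rintro _ ⟨y, rfl⟩
  have htop : t ⁻¹ᵁ U = ⊤ := Scheme.preimage_eq_top_of_closedPoint_mem t h
  exact htop.ge (Set.mem_univ y)

theorem finite_pointsOver {X : Scheme.{u}} {R k : CommRingCat.{u}} (π : X ⟶ Spec R)
    [LocallyOfFiniteType π] [QuasiCompact π] [Finite k] [IsLocalRing k] (c : R ⟶ k) :
    Finite (Scheme.PointsOver π c) := by
  have : CompactSpace X := QuasiCompact.compactSpace_of_compactSpace π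
  let 𝒰 := X.affineCover.finiteSubcover
  have (i : 𝒰.I₀) : Finite (Scheme.PointsOver (𝒰.f i ≫ π) c) :=
    finite_pointsOver_of_affine (hq := inferInstanceAs (LocallyOfFiniteType (𝒰.f i ≫ π)))
      (𝒰.f i ≫ π) c
  let toX (u : Σ i, Scheme.PointsOver (𝒰.f i ≫ π) c) : Scheme.PointsOver π c :=
    ⟨u.2.1 ≫ 𝒰.f u.1, by simpa using u.2.2⟩
  refine .of_surjective toX fun ⟨t, ht⟩ ↦ ?_
  obtain ⟨i, hi⟩ := 𝒰.exists_eq (t (closedPoint k))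
  have hrange : Set.range t ⊆ Set.range (𝒰.f i) :=
    range_subset_opensRange_of_closedPoint_mem t (U := (𝒰.f i).opensRange) hi
  have hfac := IsOpenImmersion.lift_fac (𝒰.f i) t hrange
  exact ⟨⟨i, IsOpenImmersion.lift (𝒰.f i) t hrange, by rw [← Category.assoc, hfac, ht]⟩,
    Subtype.ext hfac⟩

end FiniteTypePoints

section PointActions

variable {X : Scheme} {R A B : CommRingCat} {π : X ⟶ Spec R} {φ : R ⟶ A}

theorem isPeriodicPt_actPt_iff {f : X ⟶ X} (hf : f ≫ π = π) {n : ℕ}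
    {s : Scheme.PointsOver π φ} :
    IsPeriodicPt (actPt f hf) n s ↔ IsPeriodicPt (fun t : Spec A ⟶ X ↦ t ≫ f) n s.1 :=
  have hsemi : Semiconj Subtype.val (actPt (φ := φ) f hf) (· ≫ f) := fun _ ↦ rfl
  (isPeriodicPt_iff_of_semiconj hsemi Subtype.val_injective).symm

/-- The `B`-valued point obtained from an `A`-valued point by restriction along `α : A ⟶ B`. -/
def restrictPt (α : A ⟶ B) (s : Scheme.PointsOver π φ) : Scheme.PointsOver π (φ ≫ α) :=
  ⟨Spec.map α ≫ s.1, by rw [Category.assoc, s.2, Spec.map_comp]⟩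

theorem semiconj_restrictPt (α : A ⟶ B) {f : X ⟶ X} (hf : f ≫ π = π) :
    Semiconj (restrictPt (φ := φ) α) (actPt f hf) (actPt f hf) :=
  fun s ↦ Subtype.ext (Category.assoc (Spec.map α) s.1 f).symm

theorem iterate_comp_right {C : Type*} [Category* C] {X T : C} (f : X ⟶ X) (k : ℕ) :
    (fun t : T ⟶ X ↦ t ≫ f)^[k] = fun t ↦ t ≫ (End.of f ^ k : End X) := by
  induction k with
  | zero => ext t; exact (Category.comp_id t).symm
  | succ k ih => ext t; rw [iterate_succ', ih, comp_apply, Category.assoc, pow_succ']; rfl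

theorem isPeriodicPt_comp_mono_iff {S : CommRingCat} {j : Spec S ⟶ X} [Mono j] {g : X ⟶ X}
    {φ : S ⟶ S} (hφ : Spec.map φ ≫ j = j ≫ g) (ψ : S ⟶ A) {n : ℕ} :
    IsPeriodicPt (fun t : Spec A ⟶ X ↦ t ≫ g) n (Spec.map ψ ≫ j) ↔
      ψ.hom.comp (φ.hom ^ n) = ψ.hom := by
  have hiter : (fun t : Spec A ⟶ X ↦ t ≫ g)^[n] (Spec.map ψ ≫ j) =
      Spec.map (CommRingCat.ofHom (ψ.hom.comp (φ.hom ^ n))) ≫ j := by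
    induction n with
    | zero => rfl
    | succ n ih =>
      rw [iterate_succ_apply', ih, Category.assoc, ← hφ, ← Spec.map_comp_assoc]
      rfl
  rw [IsPeriodicPt, IsFixedPt, hiter, cancel_mono, Spec.map_inj, CommRingCat.hom_ext_iff]
  rfl

end PointActions

section Stalks

/-- The endomorphism of the stalk `𝒪_{X,x}` induced by an endomorphism of `X` fixing `x`. -/
def stalkEnd {X : Scheme} (g : X ⟶ X) {x : X} (hx : g x = x) :
    X.presheaf.stalk x ⟶ X.presheaf.stalk x :=
  X.presheaf.stalkSpecializes (specializes_of_eq hx) ≫ g.stalkMap x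

theorem SpecMap_stalkEnd_fromSpecStalk {X : Scheme} {g : X ⟶ X} {x : X} (hx : g x = x) :
    Spec.map (stalkEnd g hx) ≫ X.fromSpecStalk x = X.fromSpecStalk x ≫ g := by
  rw [stalkEnd, Spec.map_comp, Category.assoc, Scheme.SpecMap_stalkSpecializes_fromSpecStalk,
    Scheme.SpecMap_stalkMap_fromSpecStalk]

theorem semiconj_apply_comp {X : Scheme} {T : Scheme} (y : T) (f : X ⟶ X) :
    Semiconj (fun t : T ⟶ X ↦ t y) (· ≫ f) f :=
  fun _ ↦ rfl

/-- A common period, under every endomorphism of `X` fixing `x`, of the points specializing to `x`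
with values in a local ring with finite residue field that have a period invertible in that ring.
It is `1` if the ring `𝒪_{X,x} ⧸ 𝔪 ^ 2` is infinite. -/
def stalkPeriod (X : Scheme) (x : X) : ℕ :=
  (Nat.card (X.presheaf.stalk x ⧸ maximalIdeal (X.presheaf.stalk x) ^ 2)).factorial

theorem finite_quotient_maximalIdeal_sq_of_isLocalHom {S A : Type*} [CommRing S] [CommRing A]
    [IsLocalRing S] [IsLocalRing A] [IsNoetherianRing S] [Finite (ResidueField A)]
    (f : S →+* A) [IsLocalHom f] : Finite (S ⧸ maximalIdeal S ^ 2) := by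
  have : Finite (ResidueField S) := .of_injective (ResidueField.map f) (RingHom.injective _)
  have : Finite (S ⧸ maximalIdeal S) := this
  exact Ideal.finite_quotient_pow (IsNoetherian.noetherian _) 2

variable {X : Scheme} [IsLocallyNoetherian X] {A : CommRingCat} [IsLocalRing A]
  [Finite (ResidueField A)] {s : Spec A ⟶ X}

theorem isPeriodicPt_stalkPeriod {g : X ⟶ X} (hx : g (s (closedPoint A)) = s (closedPoint A))
    {n : ℕ} (hn : IsUnit (n : A)) (hs : IsPeriodicPt (fun t : Spec A ⟶ X ↦ t ≫ g) n s) :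
    IsPeriodicPt (fun t : Spec A ⟶ X ↦ t ≫ g) (stalkPeriod X (s (closedPoint A))) s := by
  let ψ := Scheme.stalkClosedPointTo s
  have hfactor : Spec.map ψ ≫ X.fromSpecStalk _ = s :=
    Scheme.Spec_stalkClosedPointTo_fromSpecStalk s
  have := finite_quotient_maximalIdeal_sq_of_isLocalHom ψ.hom
  have hn' : IsUnit (n : X.presheaf.stalk (s (closedPoint A))) :=
    isUnit_of_map_unit ψ.hom _ (by simpa using hn)
  rw [← hfactor, isPeriodicPt_comp_mono_iff (SpecMap_stalkEnd_fromSpecStalk hx)] at hs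
  have := (isPeriodicPt_comp_mono_iff (SpecMap_stalkEnd_fromSpecStalk hx) ψ).2
    (comp_pow_factorial_eq_of_comp_pow_eq hn' hs)
  rwa [hfactor] at this

theorem isPeriodicPt_mul_stalkPeriod {f : X ⟶ X} {q n : ℕ}
    (hx : IsPeriodicPt f q (s (closedPoint A))) (hn : IsUnit (n : A))
    (hs : IsPeriodicPt (fun t : Spec A ⟶ X ↦ t ≫ f) n s) :
    IsPeriodicPt (fun t : Spec A ⟶ X ↦ t ≫ f) (q * stalkPeriod X (s (closedPoint A))) s := by
  let g : X ⟶ X := (End.of f ^ q : End X)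
  have hiter : (fun t : Spec A ⟶ X ↦ t ≫ f)^[q] = fun t ↦ t ≫ g := iterate_comp_right f q
  have hgx : g (s (closedPoint A)) = s (closedPoint A) :=
    congr($(hiter) s (closedPoint A)).symm.trans
      (((semiconj_apply_comp (closedPoint A) f).iterate_right q s).trans hx.eq)
  rw [IsPeriodicPt, iterate_mul, hiter]
  exact isPeriodicPt_stalkPeriod hgx hn (hiter ▸ hs.iterate q)

end Stalks

section PeriodBound

theorem isUnit_natCast_of_coprime {S : Type*} [CommRing S] [IsLocalRing S] {p n : ℕ}
    (hp : (p : S) ∈ maximalIdeal S) (hn : n.Coprime p) : IsUnit (n : S) := by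
  obtain ⟨a, b, hab⟩ := hn.cast (R := S)
  have hbp : ¬IsUnit (b * (p : S)) := Ideal.mul_mem_left _ b hp
  exact isUnit_of_mul_isUnit_right
    ((isUnit_or_isUnit_of_isUnit_add (hab ▸ isUnit_one)).resolve_right hbp)

theorem exists_perSetP_dvd_of_isLocalRing {p : ℕ} {R A : CommRingCat.{u}} [IsNoetherianRing R]
    [IsLocalRing A] [Finite (ResidueField A)] (hp : (p : A) ∈ maximalIdeal A) (φ : R ⟶ A)
    {X : Scheme.{u}} (π : X ⟶ Spec R) [LocallyOfFiniteType π] [QuasiCompact π] :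
    ∃ m : ℕ, 0 < m ∧ ∀ (f : X ⟶ X) (hf : f ≫ π = π),
      ∀ n ∈ PerSetP p (actPt (φ := φ) f hf), n ∣ m := by
  let k := CommRingCat.of (ResidueField A)
  let res : A ⟶ k := CommRingCat.ofHom (residue A)
  have : IsLocallyNoetherian X := LocallyOfFiniteType.isLocallyNoetherian π
  have : Finite (Scheme.PointsOver π (φ ≫ res)) := finite_pointsOver π _
  have := Fintype.ofFinite (Scheme.PointsOver π (φ ≫ res))
  let q := (Nat.card (Scheme.PointsOver π (φ ≫ res))).factorial
  let N (t : Scheme.PointsOver π (φ ≫ res)) : ℕ := stalkPeriod X (t.1 (closedPoint k))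
  refine ⟨q * ∏ t, N t,
    Nat.mul_pos (Nat.factorial_pos _) (Finset.prod_pos fun t _ ↦ Nat.factorial_pos _), ?_⟩
  rintro f hf _ ⟨⟨hpos, s, rfl⟩, hcop⟩
  let t := restrictPt res s
  have hs := isPeriodicPt_minimalPeriod (actPt f hf) s
  have ht : IsPeriodicPt (actPt f hf) q t := isPeriodicPt_factorial_of_card_le
    (mk_mem_periodicPts hpos (hs.map (semiconj_restrictPt res hf))) le_rfl
  have htx : t.1 (closedPoint k) = s.1 (closedPoint A) :=
    congrArg s.1 (comap_closedPoint (residue A))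
  have hsx : IsPeriodicPt f q (s.1 (closedPoint A)) :=
    htx ▸ ((isPeriodicPt_actPt_iff hf).1 ht).map (semiconj_apply_comp (closedPoint k) f)
  have hN : N t = stalkPeriod X (s.1 (closedPoint A)) := congrArg (stalkPeriod X) htx
  have hperiod : IsPeriodicPt (actPt f hf) (q * N t) s := by
    rw [isPeriodicPt_actPt_iff] at hs ⊢
    rw [hN]
    exact isPeriodicPt_mul_stalkPeriod hsx (isUnit_natCast_of_coprime hp hcop) hs
  exact hperiod.minimalPeriod_dvd.trans
    (mul_dvd_mul_left q (Finset.dvd_prod_of_mem N (Finset.mem_univ t)))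

theorem restrictPt_bijective {R : CommRingCat.{u}} {X : Scheme.{u}} {π : X ⟶ Spec R}
    (hπ : ValuativeCriterion π) {A K : Type u} [CommRing A] [IsDomain A] [ValuationRing A]
    [Field K] [Algebra A K] [IsFractionRing A K] (φ : R ⟶ CommRingCat.of A) :
    Bijective (restrictPt (π := π) (φ := φ) (CommRingCat.ofHom (algebraMap A K))) := by
  let square (s : Scheme.PointsOver π (φ ≫ CommRingCat.ofHom (algebraMap A K))) :
      ValuativeCommSq π :=
    { R := A, K := K, i₁ := s.1, i₂ := Spec.map φ,
      commSq := ⟨s.2.trans (Spec.map_comp _ _)⟩ }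
  constructor
  · intro s t hst
    have := hπ.uniqueness (square (restrictPt _ s))
    have heq := Subsingleton.elim (α := (square (restrictPt _ s)).commSq.LiftStruct)
      ⟨s.1, rfl, s.2⟩ ⟨t.1, congr(($hst).1).symm, t.2⟩
    exact Subtype.ext congr(($heq).l)
  · intro s
    obtain ⟨l, hl₁, hl₂⟩ := (hπ.existence (square s)).exists_lift
    exact ⟨⟨l, hl₂⟩, Subtype.ext hl₁⟩

theorem exists_perSetP_dvd_of_valuationRing {p : ℕ} {R : CommRingCat.{u}} [IsNoetherianRing R]
    {A K : Type u} [CommRing A] [IsDomain A] [ValuationRing A] [Finite (ResidueField A)]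
    (hp : (p : A) ∈ maximalIdeal A) [Field K] [Algebra A K] [IsFractionRing A K]
    (φ : R ⟶ CommRingCat.of A) {X : Scheme.{u}} (π : X ⟶ Spec R) [IsProper π] :
    ∃ m : ℕ, 0 < m ∧ ∀ (f : X ⟶ X) (hf : f ≫ π = π),
      ∀ n ∈ PerSetP p (actPt (φ := φ ≫ CommRingCat.ofHom (algebraMap A K)) f hf), n ∣ m := by
  have hπ : ValuativeCriterion π := by
    have := ‹IsProper π›
    rw [IsProper.eq_valuativeCriterion] at this
    exact this.1.1.1
  obtain ⟨m, hm, hdvd⟩ := exists_perSetP_dvd_of_isLocalRing hp φ π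
  refine ⟨m, hm, fun f hf n hn ↦ hdvd f hf n ?_⟩
  rwa [PerSetP, perSet_eq_of_semiconj (semiconj_restrictPt _ hf) (restrictPt_bijective hπ φ)] at hn

end PeriodBound

section TotalRamification

theorem inertiaDeg_eq_one_of_map_eq_pow_finrank {R S : Type*} [CommRing R] [IsDomain R]
    [CommRing S] [IsDedekindDomain S] [Algebra R S] [Module.Finite R S] [Module.Flat R S]
    [FaithfulSMul R S]
    {𝔭 : Ideal R} [𝔭.IsPrime] {P : Ideal S} [P.IsPrime] [P.LiesOver 𝔭]
    (h0 : 𝔭 ≠ ⊥) (h : 𝔭.map (algebraMap R S) = P ^ Module.finrank R S) :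
    P.inertiaDeg R = 1 := by
  have hP : P ≠ ⊥ := Ideal.ne_bot_of_liesOver_of_ne_bot h0 P
  have hmap : 𝔭.map (algebraMap R S) ≠ ⊥ := by
    rwa [Ne, Ideal.map_eq_bot_iff_of_injective (FaithfulSMul.algebraMap_injective R S)]
  have := (Algebra.QuasiFinite.finite_primesOver (S := S) 𝔭).fintype
  have hram : P.ramificationIdx R = Module.finrank R S := by
    rw [Ideal.IsDedekindDomain.ramificationIdx_eq_multiplicity 𝔭 P hmap, h,
      multiplicity_pow_self_of_prime (Ideal.prime_of_isPrime hP ‹_›)]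
  have hle : P.ramificationIdx R * P.inertiaDeg R ≤ P.ramificationIdx R := calc
    _ ≤ ∑ Q : 𝔭.primesOver S, Q.1.ramificationIdx R * Q.1.inertiaDeg R :=
      Finset.single_le_sum (f := fun Q : 𝔭.primesOver S ↦ Q.1.ramificationIdx R * Q.1.inertiaDeg R)
        (fun _ _ ↦ Nat.zero_le _) (Finset.mem_univ ⟨P, ‹_›, ‹_›⟩)
    _ = P.ramificationIdx R := by rw [Ideal.sum_ramification_inertia_eq_finrank, hram]
  exact le_antisymm
    (le_of_mul_le_mul_left (by rwa [mul_one]) (P.ramificationIdx_pos R)) (P.inertiaDeg_pos R)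

theorem exists_sub_algebraMap_mem_of_inertiaDeg_eq_one {R S : Type*} [CommRing R] [CommRing S]
    [Algebra R S] (𝔭 : Ideal R) [𝔭.IsMaximal] {P : Ideal S} [P.IsMaximal] [P.LiesOver 𝔭]
    (h : P.inertiaDeg R = 1) (s : S) : ∃ r : R, s - algebraMap R S r ∈ P := by
  let := Ideal.Quotient.field 𝔭
  rw [Ideal.inertiaDeg_eq_of_isMaximal 𝔭 P,
    Algebra.finrank_eq_one_iff_bijective_algebraMap] at h
  obtain ⟨x, hx⟩ := h.2 (Ideal.Quotient.mk P s)
  obtain ⟨r, rfl⟩ := Ideal.Quotient.mk_surjective x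
  exact ⟨r, Ideal.Quotient.eq.1 hx.symm⟩

theorem eq_comap_of_map_eq_pow {R S A : Type*} [CommRing R] [CommRing S] [CommRing A]
    [Algebra R S] [Algebra S A] [Algebra R A] [IsScalarTower R S A] {𝔭 : Ideal R} {P : Ideal S}
    [hP : P.IsMaximal] {Q : Ideal A} [Q.IsPrime] {n : ℕ} (h : 𝔭.map (algebraMap R S) = P ^ n)
    (hQ : 𝔭 ≤ Q.comap (algebraMap R A)) : P = Q.comap (algebraMap S A) := by
  refine hP.eq_of_le (Ideal.IsPrime.ne_top inferInstance) (Ideal.IsPrime.le_of_pow_le (n := n) ?_)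
  rwa [← h, Ideal.map_le_iff_le_comap, Ideal.comap_comap, ← IsScalarTower.algebraMap_eq]

theorem exists_residue_algebraMap_eq {S L A K : Type*} [CommRing S] [IsDedekindDomain S]
    [Field L] [Algebra S L] [IsFractionRing S L] [CommRing A] [IsLocalRing A] [Algebra S A]
    [Field K] [Algebra L K] [Algebra S K] [IsScalarTower S L K] [Algebra A K]
    [FaithfulSMul A K] [IsScalarTower S A K] {v : IsDedekindDomain.HeightOneSpectrum S}
    (hv : v.asIdeal = (maximalIdeal A).comap (algebraMap S A)) {a : A} {l : L}
    (hal : algebraMap A K a = algebraMap L K l) :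
    ∃ s : S, residue A (algebraMap S A s) = residue A a := by
  have hdescend {b c : S} (h : l * algebraMap S L c = algebraMap S L b) :
      a * algebraMap S A c = algebraMap S A b := by
    refine FaithfulSMul.algebraMap_injective A K ?_
    rw [map_mul, hal, ← IsScalarTower.algebraMap_apply, ← IsScalarTower.algebraMap_apply,
      IsScalarTower.algebraMap_apply S L K, IsScalarTower.algebraMap_apply S L K, ← map_mul, h]
  have hmem (c : S) : c ∈ v.asIdeal ↔ residue A (algebraMap S A c) = 0 := by
    rw [hv, Ideal.mem_comap, residue_eq_zero_iff]
  obtain ⟨b, c, hc, hbc⟩ : ∃ b c : S, c ∉ v.asIdeal ∧ a * algebraMap S A c = algebraMap S A b := by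
    obtain ⟨n, d, h | h⟩ := v.exists_primeCompl_mul_eq_or_mul_eq l
    · exact ⟨n, d, d.2, hdescend h⟩
    · refine ⟨d, n, fun hn ↦ d.2 ?_, hdescend h⟩
      rw [hmem] at hn
      rw [SetLike.mem_coe, hmem, ← hdescend h, map_mul, hn, mul_zero]
  obtain ⟨e, w, hw, hew⟩ := v.isMaximal.exists_inv hc
  refine ⟨b * e, ?_⟩
  have hinv : residue A (algebraMap S A e) * residue A (algebraMap S A c) = 1 := by
    simpa [(hmem w).1 hw] using congr(residue A (algebraMap S A $hew))
  rw [map_mul, map_mul, ← hbc, map_mul]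
  linear_combination residue A a * hinv

theorem mem_valuationSubring_of_isIntegral {R K : Type*} [CommRing R] [Field K] [Algebra R K]
    {A : ValuationSubring K} [Algebra R A] [IsScalarTower R A K] {x : K} (hx : IsIntegral R x) :
    x ∈ A := by
  obtain ⟨y, rfl⟩ := IsIntegrallyClosed.isIntegral_iff.1 (hx.tower_top (A := A))
  exact y.2

theorem surjective_residue_comp_of_isTotallyRamifiedAtAlgExt {R F K : Type*} [CommRing R]
    [IsDedekindDomain R] [Field F] [Algebra R F] [IsFractionRing R F] [Field K] [Algebra F K]
    [Algebra.IsSeparable F K] [Algebra R K] [IsScalarTower R F K] {𝔭 : Ideal R} [𝔭.IsMaximal]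
    (h0 : 𝔭 ≠ ⊥) (hram : IsTotallyRamifiedAtAlgExt R F K 𝔭) {A : ValuationSubring K}
    [Algebra R A] [IsScalarTower R A K] (h𝔭 : (maximalIdeal A).comap (algebraMap R A) = 𝔭) :
    Surjective ((residue A).comp (algebraMap R A)) := by
  intro y
  obtain ⟨a, rfl⟩ := residue_surjective y
  let L := F⟮(a : K)⟯
  let S := integralClosure R L
  have : IsScalarTower R L K := .of_algebraMap_eq fun _ ↦ rfl
  have : FiniteDimensional F L :=
    IntermediateField.adjoin.finiteDimensional (Algebra.IsIntegral.isIntegral _)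
  have : IsDedekindDomain S := integralClosure.isDedekindDomain R F L
  have : Module.Finite R S := IsIntegralClosure.finite R F L S
  have : IsFractionRing S L := integralClosure.isFractionRing_of_finite_extension F L
  have : FaithfulSMul R S := .of_field_isFractionRing R S F L
  have hSA (s : S) : algebraMap S K s ∈ A :=
    mem_valuationSubring_of_isIntegral (R := R) (s.2.map (IsScalarTower.toAlgHom R L K))
  let : Algebra S A := ((algebraMap S K).codRestrict A.toSubring hSA).toAlgebra
  have : IsScalarTower S A K := .of_algebraMap_eq fun _ ↦ rfl
  have : IsScalarTower R S A := .of_algebraMap_eq fun r ↦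
    Subtype.ext (IsScalarTower.algebraMap_apply R A K r).symm
  obtain ⟨P, hP, hPpow⟩ := hram L inferInstance
  have hPcomap : P = (maximalIdeal A).comap (algebraMap S A) := eq_comap_of_map_eq_pow hPpow h𝔭.ge
  have : P.LiesOver 𝔭 := ⟨by
    rw [hPcomap, Ideal.under, Ideal.comap_comap, ← IsScalarTower.algebraMap_eq, h𝔭]⟩
  rw [IsFractionRing.finrank_eq R F S L] at hPpow
  obtain ⟨s, hs⟩ := exists_residue_algebraMap_eq (L := L) (K := K)
    (v := ⟨P, inferInstance, Ideal.ne_bot_of_liesOver_of_ne_bot h0 P⟩) hPcomap (a := a)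
    (l := IntermediateField.AdjoinSimple.gen F (a : K)) rfl
  obtain ⟨r, hr⟩ := exists_sub_algebraMap_mem_of_inertiaDeg_eq_one 𝔭
    (inertiaDeg_eq_one_of_map_eq_pow_finrank h0 hPpow) s
  refine ⟨r, ?_⟩
  rw [hPcomap, Ideal.mem_comap, map_sub, ← IsScalarTower.algebraMap_apply,
    ← Ideal.Quotient.eq] at hr
  exact hr.symm.trans hs

theorem exists_valuationSubring_comap_maximalIdeal_eq {R K : Type*} [CommRing R] [Field K]
    [Algebra R K] [FaithfulSMul R K] (𝔭 : Ideal R) [𝔭.IsPrime] :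
    ∃ (A : ValuationSubring K) (i : R →+* A), (algebraMap A K).comp i = algebraMap R K ∧
      (maximalIdeal A).comap i = 𝔭 := by
  have hunit (y : 𝔭.primeCompl) : IsUnit (algebraMap R K y) := .mk0 _ fun h ↦
    y.2 ((FaithfulSMul.algebraMap_eq_zero_iff R K).1 h ▸ 𝔭.zero_mem)
  let j : Localization.AtPrime 𝔭 →+* K := IsLocalization.lift hunit
  obtain ⟨A, hA, _⟩ := exists_factor_valuationRing j
  let jA : Localization.AtPrime 𝔭 →+* A := j.codRestrict A.toSubring hA
  have : IsLocalHom jA := ‹_›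
  refine ⟨A, jA.comp (algebraMap R _), IsLocalization.lift_comp hunit, ?_⟩
  rw [← Ideal.comap_comap, maximalIdeal_comap jA]
  exact Localization.AtPrime.under_maximalIdeal

end TotalRamification

theorem stmt_3_general {p : ℕ} {R : Type u} [CommRing R] [IsDedekindDomain R]
    {F : Type*} [Field F] [Algebra R F] [IsFractionRing R F]
    {𝔭 : Ideal R} [𝔭.IsMaximal] [Finite (R ⧸ 𝔭)] (h0 : 𝔭 ≠ ⊥) (hp : (p : R) ∈ 𝔭)
    {K : Type u} [Field K] [Algebra F K] [Algebra.IsSeparable F K]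
    (hram : IsTotallyRamifiedAtAlgExt R F K 𝔭) [Algebra R K] [IsScalarTower R F K]
    {X : Scheme.{u}} (π : X ⟶ Spec (CommRingCat.of R)) [IsProper π] :
    ∃ m : ℕ, 0 < m ∧ ∀ (f : X ⟶ X) (hf : f ≫ π = π),
      ∀ n ∈ PerSetP p (actPt (φ := CommRingCat.ofHom (algebraMap R K)) f hf), n ∣ m := by
  have : FaithfulSMul R K := .trans R F K
  obtain ⟨A, i, hiK, hi⟩ := exists_valuationSubring_comap_maximalIdeal_eq (K := K) 𝔭
  let : Algebra R A := i.toAlgebra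
  have : IsScalarTower R A K := .of_algebraMap_eq' hiK.symm
  have hsurj : Surjective ((residue A).comp i) :=
    surjective_residue_comp_of_isTotallyRamifiedAtAlgExt h0 hram hi
  have hker (r : R) (hr : r ∈ 𝔭) : residue A (i r) = 0 := by
    rwa [residue_eq_zero_iff, ← Ideal.mem_comap, hi]
  have : Finite (ResidueField A) :=
    .of_surjective _ (Ideal.Quotient.lift_surjective_of_surjective 𝔭 hker hsurj)
  have hpA : (p : A) ∈ maximalIdeal A := by
    rw [← hi, Ideal.mem_comap, map_natCast] at hp
    exact hp
  have : IsNoetherianRing (CommRingCat.of R) := inferInstanceAs (IsNoetherianRing R)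
  have hφ : CommRingCat.ofHom i ≫ CommRingCat.ofHom (algebraMap A K) =
      CommRingCat.ofHom (algebraMap R K) := CommRingCat.hom_ext hiK
  exact hφ ▸ exists_perSetP_dvd_of_valuationRing hpA (CommRingCat.ofHom i) π

/-- Let `O` be the ring of integers of a number field `F` and `K` an infinite
algebraic extension of `F` which is totally ramified at a prime `𝔭` of `F` dividing the rational
prime `p`.  For every proper variety `X` over `Spec O` there is a constant `m > 0` such that for
every `O`-morphism `f : X ⟶ X` every element of `Per_(p)(X(K), f)` is at most `m`. -/
theorem stmt_3 (p : ℕ) [Fact p.Prime]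
    (F : Type) [Field F] [NumberField F]
    -- `𝔭` a prime of `F` dividing `p`
    (𝔭 : Ideal (𝓞 F)) (h𝔭 : 𝔭.IsMaximal) (h𝔭p : (p : 𝓞 F) ∈ 𝔭)
    -- `K` an infinite algebraic extension of `F`, totally ramified at `𝔭`
    (K : Type) [Field K] [Algebra F K] [Algebra.IsAlgebraic F K]
    (hKinf : ¬ FiniteDimensional F K)
    (hKram : IsTotallyRamifiedAtAlgExt (𝓞 F) F K 𝔭)
    [Algebra (𝓞 F) K] [IsScalarTower (𝓞 F) F K]
    -- `X` a proper variety over `Spec (𝓞 F)`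
    (X : Scheme) (π : X ⟶ Spec (CommRingCat.of (𝓞 F))) [IsProper π] [IsIntegral X] :
    ∃ m : ℕ, 0 < m ∧
      ∀ (f : X ⟶ X) (hf : f ≫ π = π),
      ∀ n ∈ PerSetP p (actPt (φ := CommRingCat.ofHom (algebraMap (𝓞 F) K)) f hf), n ≤ m := by
  have h0 : 𝔭 ≠ ⊥ := by
    rintro rfl
    exact (Fact.out : p.Prime).ne_zero (Nat.cast_eq_zero.1 h𝔭p)
  have : Finite (𝓞 F ⧸ 𝔭) := Ideal.finiteQuotientOfFreeOfNeBot 𝔭 h0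
  obtain ⟨m, hm, hdvd⟩ := stmt_3_general h0 h𝔭p hKram π
  exact ⟨m, hm, fun f hf n hn ↦ Nat.le_of_dvd hm (hdvd f hf n hn)⟩
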